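/- For every integer p, the group presented on three generators r, x, y with the two relators r^p · (y x y⁻¹)⁻¹ and r^{-p} · (x y x⁻¹)⁻¹ is isomorphic to the group presented on two generators r, y with the single relator (y⁻¹ r^p y⁻¹) · (r^p y⁻¹ r^p)⁻¹. Equivalently, ⟨r, x, y ∣ r^p = y x y⁻¹, r^{-p} = x y x⁻¹⟩ ≅ ⟨r, y ∣ y⁻¹ r^p y⁻¹ = r^p y⁻¹ r^p⟩. -/

import Mathlib

open FreeGroup

/-- Generators `r`, `x`, `y` for the three-generator presentation:
`0 ↦ r`, `1 ↦ x`, `2 ↦ y` in `Fin 3`. Relators encode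
`r^p = y x y⁻¹` and `r^{-p} = x y x⁻¹`. -/
def threeGenRels (p : ℤ) : Set (FreeGroup (Fin 3)) :=
  { of 0 ^ p * (of 2 * of 1 * (of 2)⁻¹)⁻¹,
    of 0 ^ (-p) * (of 1 * of 2 * (of 1)⁻¹)⁻¹ }

/-- Generators `r`, `y` for the two-generator presentation:
`0 ↦ r`, `1 ↦ y` in `Fin 2`. The relator encodes
`y⁻¹ r^p y⁻¹ = r^p y⁻¹ r^p`. -/
def twoGenRels (p : ℤ) : Set (FreeGroup (Fin 2)) :=
  { (of 1)⁻¹ * of 0 ^ p * (of 1)⁻¹ * (of 0 ^ p * (of 1)⁻¹ * of 0 ^ p)⁻¹ }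

/-!
The relation `r^p = y x y⁻¹` says exactly that `x = y⁻¹ r^p y`, and substituting this value of `x`
turns the other relation into `y⁻¹ r^p y⁻¹ = r^p y⁻¹ r^p`. So in every group a solution `(r, x, y)`
of the first system of relations is the same thing as a solution `(r, y)` of the second, and the
universal properties of the two presented groups turn this into an isomorphism.
-/

section Conjugation

variable {G : Type*} [Group G]

theorem eq_conj_iff_eq_inv_conj (R x y : G) : R = y * x * y⁻¹ ↔ x = y⁻¹ * R * y := by
  rw [eq_mul_inv_iff_mul_eq, mul_assoc, eq_inv_mul_iff_mul_eq, eq_comm]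

theorem inv_eq_conj_iff_braid (R y : G) :
    R⁻¹ = y⁻¹ * R * y * y * (y⁻¹ * R * y)⁻¹ ↔ y⁻¹ * R * y⁻¹ = R * y⁻¹ * R := by
  have conj_inv_eq : (y⁻¹ * R * y * y * (y⁻¹ * R * y)⁻¹)⁻¹ = y⁻¹ * R * y⁻¹ * (y⁻¹ * R)⁻¹ := by
    group
  rw [inv_eq_iff_eq_inv, conj_inv_eq, eq_mul_inv_iff_mul_eq, ← mul_assoc, eq_comm]

theorem conj_and_inv_conj_iff (R x y : G) :
    R = y * x * y⁻¹ ∧ R⁻¹ = x * y * x⁻¹ ↔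
      x = y⁻¹ * R * y ∧ y⁻¹ * R * y⁻¹ = R * y⁻¹ * R := by
  rw [eq_conj_iff_eq_inv_conj]
  refine and_congr_right ?_
  rintro rfl
  exact inv_eq_conj_iff_braid R y

end Conjugation

section Presentation

variable {α β G : Type*} [Group G]

/-- The family `f` satisfies the relations `rels`: every relator evaluates to `1` at `f`. Such
families are exactly the homomorphisms from `PresentedGroup rels` to `G`. -/
abbrev Satisfies (rels : Set (FreeGroup α)) (f : α → G) : Prop :=
  ∀ w ∈ rels, FreeGroup.lift f w = 1

theorem satisfies_of (rels : Set (FreeGroup α)) :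
    Satisfies rels (PresentedGroup.of : α → PresentedGroup rels) := by
  intro w hw
  have lift_of_eq_mk : FreeGroup.lift PresentedGroup.of = PresentedGroup.mk rels :=
    FreeGroup.ext_hom _ _ fun _ ↦ FreeGroup.lift_apply_of
  rw [lift_of_eq_mk]
  exact PresentedGroup.one_of_mem hw

/-- Two presentations define isomorphic groups as soon as the generators of each are expressed in
the group of the other, compatibly with the relations and so that the two substitutions are
mutually inverse on generators. -/
def presentedGroupMulEquiv {rels : Set (FreeGroup α)} {rels' : Set (FreeGroup β)}
    {f : α → PresentedGroup rels'} {g : β → PresentedGroup rels}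
    (hf : Satisfies rels f) (hg : Satisfies rels' g)
    (hgf : ∀ a, PresentedGroup.toGroup hg (f a) = PresentedGroup.of a)
    (hfg : ∀ b, PresentedGroup.toGroup hf (g b) = PresentedGroup.of b) :
    PresentedGroup rels ≃* PresentedGroup rels' :=
  MonoidHom.toMulEquiv (PresentedGroup.toGroup hf) (PresentedGroup.toGroup hg)
    (PresentedGroup.ext fun a ↦ by simp [hgf]) (PresentedGroup.ext fun b ↦ by simp [hfg])

theorem satisfies_twoGenRels_iff (p : ℤ) (g : Fin 2 → G) :
    Satisfies (twoGenRels p) g ↔ (g 1)⁻¹ * g 0 ^ p * (g 1)⁻¹ = g 0 ^ p * (g 1)⁻¹ * g 0 ^ p := by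
  simp only [Satisfies, twoGenRels, Set.mem_singleton_iff, forall_eq,
    _root_.map_mul, _root_.map_inv, _root_.map_zpow, lift_apply_of, mul_inv_eq_one]

theorem satisfies_threeGenRels_iff (p : ℤ) (f : Fin 3 → G) :
    Satisfies (threeGenRels p) f ↔
      f 1 = (f 2)⁻¹ * f 0 ^ p * f 2 ∧ Satisfies (twoGenRels p) ![f 0, f 2] := by
  calc Satisfies (threeGenRels p) f
      ↔ f 0 ^ p = f 2 * f 1 * (f 2)⁻¹ ∧ (f 0 ^ p)⁻¹ = f 1 * f 2 * (f 1)⁻¹ := by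
        simp only [Satisfies, threeGenRels, Set.mem_insert_iff, Set.mem_singleton_iff,
          forall_eq_or_imp, forall_eq, zpow_neg, _root_.map_mul, _root_.map_inv, _root_.map_zpow,
          lift_apply_of, mul_inv_eq_one]
    _ ↔ f 1 = (f 2)⁻¹ * f 0 ^ p * f 2 ∧
          (f 2)⁻¹ * f 0 ^ p * (f 2)⁻¹ = f 0 ^ p * (f 2)⁻¹ * f 0 ^ p :=
        conj_and_inv_conj_iff _ _ _
    _ ↔ f 1 = (f 2)⁻¹ * f 0 ^ p * f 2 ∧ Satisfies (twoGenRels p) ![f 0, f 2] :=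
        and_congr_right fun _ ↦ (satisfies_twoGenRels_iff p ![f 0, f 2]).symm

end Presentation

/-- `⟨r, x, y ∣ r^p = y x y⁻¹, r^{-p} = x y x⁻¹⟩ ≅
⟨r, y ∣ y⁻¹ r^p y⁻¹ = r^p y⁻¹ r^p⟩` for every integer `p`. -/
theorem presentation_eliminate_generator (p : ℤ) :
    Nonempty (PresentedGroup (threeGenRels p) ≃* PresentedGroup (twoGenRels p)) := by
  let r : PresentedGroup (twoGenRels p) := PresentedGroup.of 0
  let y : PresentedGroup (twoGenRels p) := PresentedGroup.of 1
  have braid : y⁻¹ * r ^ p * y⁻¹ = r ^ p * y⁻¹ * r ^ p :=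
    (satisfies_twoGenRels_iff p _).mp (satisfies_of _)
  have hf : Satisfies (threeGenRels p) ![r, y⁻¹ * r ^ p * y, y] :=
    (satisfies_threeGenRels_iff p _).mpr ⟨rfl, (satisfies_twoGenRels_iff p _).mpr braid⟩
  obtain ⟨hx, hg⟩ := (satisfies_threeGenRels_iff p _).mp (satisfies_of (threeGenRels p))
  refine ⟨presentedGroupMulEquiv hf hg ?_ ?_⟩
  · intro a
    fin_cases a <;> simp [r, y, hx]
  · intro b
    fin_cases b <;> rfl
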